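/- Let D = (V, E; c; s, t) be a flow network in which every arc belongs to at least one s-t path. If the associated flow game Γ_D is convex, then the directed graph (V, E) is acyclic, i.e., it contains no directed cycle. -/

import Mathlib

open scoped Classical
open Finset

noncomputable section

/-- The arcs (consecutive vertex pairs) of a vertex list. -/
def arcsOf {V : Type*} [DecidableEq V] (vs : List V) : Finset (V × V) :=
  (vs.zip vs.tail).toFinset

/-- `vs` is the vertex list of a directed path from `a` to `b` using arcs of `E`,
with pairwise distinct vertices. -/
def IsPathList {V : Type*} (E : Finset (V × V)) (a b : V) (vs : List V) : Prop :=
  vs.Nodup ∧ vs.head? = some a ∧ vs.getLast? = some b ∧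
    vs.Chain' (fun x y => (x, y) ∈ E)

/-- `P` is (the arc set of) an `s`-`t` path in the network with arc set `E`. -/
def IsSTPath {V : Type*} [DecidableEq V] (E : Finset (V × V)) (s t : V)
    (P : Finset (V × V)) : Prop :=
  ∃ vs : List V, IsPathList E s t vs ∧ P = arcsOf vs

/-- The capacity of a path (arc set): the minimum capacity of its arcs. -/
def pathCap {V : Type*} (c : V × V → ℝ) (P : Finset (V × V)) : ℝ :=
  sInf (c '' (P : Set (V × V)))

/-- `e` is a bottleneck arc of some `s`-`t` path, i.e. `e ∈ B`. -/
def IsBottleneck {V : Type*} [DecidableEq V] (E : Finset (V × V)) (c : V × V → ℝ)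
    (s t : V) (e : V × V) : Prop :=
  ∃ P : Finset (V × V), IsSTPath E s t P ∧ e ∈ P ∧ c e = pathCap c P

/-- The finite set `𝒫` of all `s`-`t` paths (as arc sets). -/
def stPaths {V : Type*} [DecidableEq V] (E : Finset (V × V)) (s t : V) :
    Finset (Finset (V × V)) :=
  E.powerset.filter (fun P => IsSTPath E s t P)

/-- The value of a flow `f`: net flow out of the source `s`. -/
def flowValue {V : Type*} [DecidableEq V] (E : Finset (V × V)) (s : V)
    (f : V × V → ℝ) : ℝ :=
  ∑ e ∈ E.filter (fun e => e.1 = s), f e - ∑ e ∈ E.filter (fun e => e.2 = s), f e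

/-- `f` is a feasible flow on the coalition `S`. -/
def IsFeasibleFlow {V : Type*} [DecidableEq V] (E : Finset (V × V)) (c : V × V → ℝ)
    (s t : V) (S : Finset (V × V)) (f : V × V → ℝ) : Prop :=
  (∀ e ∈ E, 0 ≤ f e ∧ f e ≤ c e) ∧
  (∀ e, e ∉ S → f e = 0) ∧
  (∀ v, v ≠ s → v ≠ t →
    ∑ e ∈ E.filter (fun e => e.2 = v), f e = ∑ e ∈ E.filter (fun e => e.1 = v), f e)

/-- `γ` is the characteristic function of the flow game on `D = (V,E;c;s,t)`:
for each coalition `S ⊆ E`, `γ S` is the maximum value of a feasible flow on `S`. -/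
def IsFlowGame {V : Type*} [DecidableEq V] (E : Finset (V × V)) (c : V × V → ℝ)
    (s t : V) (γ : Finset (V × V) → ℝ) : Prop :=
  ∀ S : Finset (V × V), S ⊆ E →
    IsGreatest {x : ℝ | ∃ f, IsFeasibleFlow E c s t S f ∧ flowValue E s f = x} (γ S)

/-- The cooperative game `γ` with player set `E` is convex (supermodular). -/
def GameConvex {V : Type*} [DecidableEq V] (E : Finset (V × V))
    (γ : Finset (V × V) → ℝ) : Prop :=
  ∀ e ∈ E, ∀ S T : Finset (V × V), S ⊆ T → T ⊆ E.erase e →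
    γ (insert e S) - γ S ≤ γ (insert e T) - γ T

/-- The directed graph with arc set `E` contains a directed cycle. -/
def HasDirectedCycle {V : Type*} (E : Finset (V × V)) : Prop :=
  ∃ (v : V) (vs : List V), (v :: vs).Nodup ∧
    (v :: vs).Chain' (fun x y => (x, y) ∈ E) ∧
    ((v :: vs).getLast (List.cons_ne_nil v vs), v) ∈ E

theorem arcsOf_cons_cons {V : Type*} [DecidableEq V] (a b : V) (l : List V) :
    arcsOf (a :: b :: l) = insert (a, b) (arcsOf (b :: l)) := by
  simp [arcsOf]

theorem arcsOf_single {V : Type*} [DecidableEq V] (a : V) :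
    arcsOf [a] = ∅ := by
  simp [arcsOf]

theorem mem_arcsOf {V : Type*} [DecidableEq V] (vs : List V) (a b : V) :
    (a, b) ∈ arcsOf vs ↔ ∃ X Y, vs = X ++ a :: b :: Y := by
  induction vs with
  | nil => simp [arcsOf]
  | cons u l ih =>
    cases l with
    | nil =>
      simp only [arcsOf_single, Finset.notMem_empty, false_iff]
      rintro ⟨X, Y, h⟩
      have := congrArg List.length h
      simp at this
      omega
    | cons w l =>
      rw [arcsOf_cons_cons, Finset.mem_insert, ih]
      constructor
      · rintro (h | ⟨X, Y, h⟩)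
        · obtain ⟨rfl, rfl⟩ := Prod.mk.inj h
          exact ⟨[], l, rfl⟩
        · exact ⟨u :: X, Y, by rw [h]; rfl⟩
      · rintro ⟨X, Y, h⟩
        cases X with
        | nil =>
          simp at h
          left; rw [h.1, h.2.1]
        | cons x X =>
          simp at h
          right; exact ⟨X, Y, h.2⟩

theorem arcsOf_subset {V : Type*} [DecidableEq V] {E : Finset (V × V)} {vs : List V}
    (h : vs.IsChain (fun x y => (x, y) ∈ E)) : arcsOf vs ⊆ E := by
  rintro ⟨a, b⟩ hx
  obtain ⟨X, Y, rfl⟩ := (mem_arcsOf _ _ _).1 hx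
  have := List.isChain_append.1 h
  have h2 := this.2.1
  rw [List.isChain_cons_cons] at h2
  exact h2.1

theorem telescope {V : Type*} [DecidableEq V] (φ : V → ℝ) (vs : List V) :
    ∀ a b, vs.Nodup → vs.head? = some a → vs.getLast? = some b →
    ∑ x ∈ arcsOf vs, (φ x.1 - φ x.2) = φ a - φ b := by
  induction vs with
  | nil => simp
  | cons u l ih =>
    intro a b hn ha hb
    cases l with
    | nil =>
      simp at ha hb
      subst ha hb
      simp [arcsOf_single]
    | cons w l =>
      have hn' := (List.nodup_cons.1 hn)
      rw [arcsOf_cons_cons, Finset.sum_insert, ih w b hn'.2 rfl (by simpa using hb)]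
      · simp at ha; subst ha; simp
      · intro h
        obtain ⟨X, Y, h⟩ := (mem_arcsOf _ _ _).1 h
        apply hn'.1
        rw [h]; simp

def net {V : Type*} [DecidableEq V] (E : Finset (V × V)) (g : V × V → ℝ) (v : V) : ℝ :=
  ∑ x ∈ E, g x * ((if x.1 = v then 1 else 0) - (if x.2 = v then 1 else 0))

theorem net_eq {V : Type*} [DecidableEq V] (E : Finset (V × V)) (g : V × V → ℝ) (v : V) :
    net E g v = ∑ e ∈ E.filter (fun e => e.1 = v), g e -
      ∑ e ∈ E.filter (fun e => e.2 = v), g e := by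
  simp [net, mul_sub, Finset.sum_sub_distrib, Finset.sum_filter]

def IsFl {V : Type*} [DecidableEq V] (E : Finset (V × V)) (s t : V) (g : V × V → ℝ) : Prop :=
  (∀ x ∈ E, 0 ≤ g x) ∧ ∀ v, v ≠ s → v ≠ t → net E g v = 0

theorem potential {V : Type*} [Fintype V] [DecidableEq V] (E : Finset (V × V))
    (g : V × V → ℝ) (φ : V → ℝ) :
    ∑ x ∈ E, g x * (φ x.1 - φ x.2) = ∑ v, φ v * net E g v := by
  simp only [net, Finset.mul_sum]
  rw [Finset.sum_comm]
  apply Finset.sum_congr rfl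
  intro x _
  have : ∀ v, φ v * (g x * ((if x.1 = v then 1 else 0) - if x.2 = v then 1 else 0)) =
    g x * ((if x.1 = v then φ v else 0) - if x.2 = v then φ v else 0) := by
    intro v; split_ifs <;> ring
  simp only [this]
  rw [← Finset.mul_sum, Finset.sum_sub_distrib]
  simp

theorem potential_st {V : Type*} [Fintype V] [DecidableEq V] {E : Finset (V × V)} {s t : V}
    (hst : s ≠ t)
    {g : V × V → ℝ} (hg : ∀ v, v ≠ s → v ≠ t → net E g v = 0) (φ : V → ℝ) (ht : φ t = 0) :
    ∑ x ∈ E, g x * (φ x.1 - φ x.2) = φ s * net E g s := by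
  rw [potential, Finset.sum_eq_single s]
  · intro v _ hv
    by_cases h : v = t
    · simp [h, ht]
    · simp [hg v hv h]
  · simp

def chi {V : Type*} [DecidableEq V] (P : Finset (V × V)) (x : V × V) : ℝ :=
  if x ∈ P then 1 else 0

theorem net_chi_path {V : Type*} [DecidableEq V] {E : Finset (V × V)} {s t : V}
    {P : Finset (V × V)} (hP : IsSTPath E s t P) (v : V) :
    net E (chi P) v = (if s = v then 1 else 0) - (if t = v then 1 else 0) := by
  obtain ⟨vs, ⟨h1, h2, h3, h4⟩, rfl⟩ := hP
  rw [← telescope (fun u => if u = v then (1:ℝ) else 0) vs s t h1 h2 h3]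
  have := arcsOf_subset h4
  simp only [net, chi, ite_mul, one_mul, zero_mul]
  rw [← Finset.sum_filter]
  congr 1
  ext x
  simp only [Finset.mem_filter]
  exact ⟨fun h => h.2, fun h => ⟨this h, h⟩⟩

theorem STPath_sub {V : Type*} [DecidableEq V] {E : Finset (V × V)} {s t : V}
    {P : Finset (V × V)} (hP : IsSTPath E s t P) : P ⊆ E := by
  obtain ⟨vs, ⟨h1, h2, h3, h4⟩, rfl⟩ := hP
  exact arcsOf_subset h4

theorem STPath_mono {V : Type*} [DecidableEq V] {E F : Finset (V × V)} {s t : V}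
    {P : Finset (V × V)} (hP : IsSTPath F s t P) (h : F ⊆ E) : IsSTPath E s t P := by
  obtain ⟨vs, ⟨h1, h2, h3, h4⟩, rfl⟩ := hP
  exact ⟨vs, ⟨h1, h2, h3, List.IsChain.imp (fun _ _ hx => h hx) h4⟩, rfl⟩

theorem STPath_nonempty {V : Type*} [DecidableEq V] {E : Finset (V × V)} {s t : V}
    (hst : s ≠ t) {P : Finset (V × V)} (hP : IsSTPath E s t P) : P.Nonempty := by
  obtain ⟨vs, ⟨h1, h2, h3, h4⟩, rfl⟩ := hP
  match vs with
  | [] => simp at h2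
  | [a] => simp at h2 h3; exact absurd (h2.symm.trans h3) hst
  | a :: b :: l => exact ⟨(a, b), by rw [arcsOf_cons_cons]; simp⟩

theorem path_of_reach {V : Type*} [DecidableEq V] (E : Finset (V × V)) (s t : V)
    (h : Relation.ReflTransGen (fun x y => (x, y) ∈ E) s t) :
    ∃ vs, IsPathList E s t vs := by
  induction h with
  | refl => exact ⟨[s], by simp, rfl, rfl, List.isChain_singleton s⟩
  | @tail b c _ hbc ih =>
    obtain ⟨vs, h1, h2, h3, h4⟩ := ih
    by_cases hc : c ∈ vs
    · obtain ⟨X, Y, rfl⟩ := List.append_of_mem hc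
      refine ⟨X ++ [c], ?_, ?_, by simp, ?_⟩
      · exact h1.sublist (by simp)
      · cases X <;> simpa using h2
      · have : X ++ c :: Y = (X ++ [c]) ++ Y := by simp
        rw [this] at h4
        exact (List.isChain_append.1 h4).1
    · refine ⟨vs ++ [c], ?_, ?_, by simp, ?_⟩
      · rw [List.nodup_append]
        refine ⟨h1, by simp, ?_⟩
        intro a ha b hb
        simp at hb; subst hb
        rintro rfl; exact hc ha
      · rw [List.head?_append, h2]; rfl
      · refine List.isChain_append.2 ⟨h4, by simp, ?_⟩
        intro x hx y hy
        rw [h3] at hx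
        simp at hx hy
        subst hx hy
        exact hbc

theorem exists_path {V : Type*} [Fintype V] [DecidableEq V] {E : Finset (V × V)} {s t : V}
    (hst : s ≠ t) {g : V × V → ℝ} (hg : IsFl E s t g) (hv : 0 < net E g s) :
    ∃ P, IsSTPath E s t P ∧ ∀ x ∈ P, 0 < g x := by
  set F := E.filter (fun x => 0 < g x) with hF
  by_cases hr : Relation.ReflTransGen (fun x y => (x, y) ∈ F) s t
  · obtain ⟨vs, h⟩ := path_of_reach F s t hr
    have hP : IsSTPath F s t (arcsOf vs) := ⟨vs, h, rfl⟩
    refine ⟨_, STPath_mono hP (Finset.filter_subset _ _), fun x hx => ?_⟩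
    exact (Finset.mem_filter.1 (STPath_sub hP hx)).2
  · exfalso
    have := potential_st hst hg.2
      (fun v => if Relation.ReflTransGen (fun x y => (x, y) ∈ F) s v then 1 else 0)
      (by simp [hr])
    rw [if_pos Relation.ReflTransGen.refl, one_mul] at this
    have h2 : net E g s ≤ 0 := by
      rw [← this]
      apply Finset.sum_nonpos
      rintro ⟨a, b⟩ hx
      have h0 := hg.1 _ hx
      dsimp only
      split_ifs with h1 h2 h2
      · simp
      · have : ¬ 0 < g (a, b) := fun h =>
          h2 (h1.tail (Finset.mem_filter.2 ⟨hx, h⟩))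
        linarith
      · linarith
      · simp
    linarith

theorem mem_stPaths {V : Type*} [DecidableEq V] {E : Finset (V × V)} {s t : V}
    {P : Finset (V × V)} : P ∈ stPaths E s t ↔ IsSTPath E s t P := by
  simp only [stPaths, Finset.mem_filter, Finset.mem_powerset]
  exact ⟨fun h => h.2, fun h => ⟨STPath_sub h, h⟩⟩

theorem net_sub_smul {V : Type*} [DecidableEq V] (E : Finset (V × V)) (f g : V × V → ℝ)
    (r : ℝ) (v : V) : net E (fun x => f x - r * g x) v = net E f v - r * net E g v := by
  simp only [net, Finset.mul_sum, ← Finset.sum_sub_distrib]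
  apply Finset.sum_congr rfl
  intros; ring

theorem net_comb {V ι : Type*} [DecidableEq V] (E : Finset (V × V)) (A : Finset ι)
    (m : ι → ℝ) (f : ι → V × V → ℝ) (v : V) :
    net E (fun x => ∑ i ∈ A, m i * f i x) v = ∑ i ∈ A, m i * net E (f i) v := by
  simp only [net, Finset.mul_sum, Finset.sum_mul]
  rw [Finset.sum_comm]
  apply Finset.sum_congr rfl; intros
  apply Finset.sum_congr rfl; intros
  ring

theorem decomp {V : Type*} [Fintype V] [DecidableEq V] {E : Finset (V × V)} {s t : V}
    (hst : s ≠ t) (n : ℕ) : ∀ (g : V × V → ℝ), IsFl E s t g →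
    (E.filter (fun x => 0 < g x)).card ≤ n →
    ∃ m : Finset (V × V) → ℝ, (∀ P, 0 ≤ m P) ∧
      (∀ x ∈ E, ∑ P ∈ stPaths E s t, m P * chi P x ≤ g x) ∧
      net E g s ≤ ∑ P ∈ stPaths E s t, m P := by
  induction n with
  | zero =>
    intro g hg hn
    refine ⟨fun _ => 0, by simp, by simpa using hg.1, ?_⟩
    by_contra h
    simp at h
    obtain ⟨P, hP, hp⟩ := exists_path hst hg h
    obtain ⟨x, hx⟩ := STPath_nonempty hst hP
    have : x ∈ E.filter (fun x => 0 < g x) := Finset.mem_filter.2 ⟨STPath_sub hP hx, hp x hx⟩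
    rw [Nat.le_zero, Finset.card_eq_zero] at hn
    rw [hn] at this
    simp at this
  | succ n ih =>
    intro g hg hn
    by_cases h : net E g s ≤ 0
    · exact ⟨fun _ => 0, by simp, by simpa using hg.1, by simpa using h⟩
    push Not at h
    obtain ⟨P, hP, hp⟩ := exists_path hst hg h
    obtain ⟨y, hy, hmin⟩ := Finset.exists_min_image P g (STPath_nonempty hst hP)
    have hPE := STPath_sub hP
    have hle : ∀ x ∈ E, g y * chi P x ≤ g x := by
      intro x hx
      unfold chi
      split_ifs with h
      · simpa using hmin x h
      · simpa using hg.1 x hx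
    have hg' : IsFl E s t (fun x => g x - g y * chi P x) := by
      constructor
      · intro x hx
        have := hle x hx
        linarith
      · intro v hv hv'
        rw [net_sub_smul, net_chi_path hP, hg.2 v hv hv']
        simp [hv.symm, hv'.symm]
    have hn' : (E.filter (fun x => 0 < g x - g y * chi P x)).card ≤ n := by
      have : (E.filter (fun x => 0 < g x - g y * chi P x)) ⊂ E.filter (fun x => 0 < g x) := by
        rw [Finset.ssubset_iff_of_subset]
        · refine ⟨y, Finset.mem_filter.2 ⟨hPE hy, hp y hy⟩, ?_⟩
          simp [chi, hy]
        · intro x hx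
          simp only [Finset.mem_filter] at hx ⊢
          refine ⟨hx.1, ?_⟩
          have : 0 ≤ chi P x := by unfold chi; split_ifs <;> simp
          have := mul_nonneg (hp y hy).le this
          linarith [hx.2]
      have := Finset.card_lt_card this
      omega
    obtain ⟨m, h1, h2, h3⟩ := ih (fun x => g x - g y * chi P x) hg' hn'
    have key : ∀ F : Finset (V × V) → ℝ, ∑ Q ∈ stPaths E s t, (m Q + if Q = P then g y else 0) * F Q
      = ∑ Q ∈ stPaths E s t, m Q * F Q + g y * F P := by
      intro F
      simp only [add_mul, Finset.sum_add_distrib, ite_mul, zero_mul]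
      rw [Finset.sum_ite_eq' _ P, if_pos (mem_stPaths.2 hP)]
    refine ⟨fun Q => m Q + if Q = P then g y else 0, ?_, ?_, ?_⟩
    · intro Q
      have := h1 Q
      have := hp y hy
      dsimp only
      split_ifs <;> linarith
    · intro x hx
      rw [key (fun Q => chi Q x)]
      have := h2 x hx
      linarith
    · have := key (fun _ => 1)
      simp only [mul_one] at this
      rw [this]
      rw [net_sub_smul, net_chi_path hP] at h3
      simp [hst.symm] at h3
      linarith

theorem feas_fl {V : Type*} [DecidableEq V] {E : Finset (V × V)} {c : V × V → ℝ} {s t : V}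
    {S : Finset (V × V)} {f : V × V → ℝ} (h : IsFeasibleFlow E c s t S f) : IsFl E s t f := by
  refine ⟨fun x hx => (h.1 x hx).1, fun v h1 h2 => ?_⟩
  rw [net_eq, h.2.2 v h1 h2, sub_self]

theorem feas_mk {V : Type*} [DecidableEq V] {E : Finset (V × V)} {c : V × V → ℝ} {s t : V}
    {S : Finset (V × V)} {f : V × V → ℝ} (h1 : ∀ e ∈ E, 0 ≤ f e ∧ f e ≤ c e)
    (h2 : ∀ e, e ∉ S → f e = 0) (h3 : ∀ v, v ≠ s → v ≠ t → net E f v = 0) :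
    IsFeasibleFlow E c s t S f := by
  refine ⟨h1, h2, fun v a b => ?_⟩
  have := h3 v a b
  rw [net_eq] at this
  linarith

theorem feas_erase {V : Type*} [DecidableEq V] {E : Finset (V × V)} {c : V × V → ℝ} {s t : V}
    {S S' : Finset (V × V)} {f : V × V → ℝ} (h : IsFeasibleFlow E c s t S f)
    (hz : ∀ x ∈ S, x ∉ S' → f x = 0) : IsFeasibleFlow E c s t S' f := by
  refine ⟨h.1, fun x hx => ?_, h.2.2⟩
  by_cases hs : x ∈ S
  · exact hz x hs hx
  · exact h.2.1 x hs

section game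
variable {V : Type*} [Fintype V] [DecidableEq V]
    {E : Finset (V × V)} {c : V × V → ℝ} {s t : V} {γ : Finset (V × V) → ℝ}

theorem le_gamma (hγ : IsFlowGame E c s t γ) {S : Finset (V × V)} (hS : S ⊆ E)
    {f : V × V → ℝ} (hf : IsFeasibleFlow E c s t S f) : net E f s ≤ γ S := by
  apply (hγ S hS).2
  exact ⟨f, hf, by rw [net_eq]; rfl⟩

theorem gamma_ex (hγ : IsFlowGame E c s t γ) {S : Finset (V × V)} (hS : S ⊆ E) :
    ∃ f, IsFeasibleFlow E c s t S f ∧ net E f s = γ S := by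
  obtain ⟨f, hf, h⟩ := (hγ S hS).1
  exact ⟨f, hf, by rw [net_eq]; exact h⟩

theorem gamma_le_of (hγ : IsFlowGame E c s t γ) {S S' : Finset (V × V)} (hS : S ⊆ E)
    (hS' : S' ⊆ E)
    (hz : ∀ f, IsFeasibleFlow E c s t S f → ∀ x ∈ S, x ∉ S' → f x = 0) : γ S ≤ γ S' := by
  obtain ⟨f, hf, h⟩ := gamma_ex hγ hS
  rw [← h]
  exact le_gamma hγ hS' (feas_erase hf (hz f hf))

theorem gamma_path_ge (hst : s ≠ t) (hγ : IsFlowGame E c s t γ) {P : Finset (V × V)}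
    (hP : IsSTPath E s t P) {r : ℝ} (hr : 0 ≤ r) (hc : ∀ e ∈ E, 0 < c e)
    (hrP : ∀ x ∈ P, r ≤ c x) : r ≤ γ P := by
  have hnet : ∀ v, net E (fun x => 0 - (-r) * chi P x) v
      = r * ((if s = v then 1 else 0) - (if t = v then 1 else 0)) := by
    intro v
    rw [net_sub_smul, net_chi_path hP]
    simp [net]
  have := le_gamma hγ (STPath_sub hP) (f := fun x => 0 - (-r) * chi P x) (feas_mk ?_ ?_ ?_)
  · rw [hnet] at this
    simpa [hst.symm] using this
  · intro x hx
    have := hc x hx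
    unfold chi
    split_ifs with h
    · have := hrP x h
      constructor <;> linarith
    · constructor <;> linarith
  · intro x hx
    simp [chi, hx]
  · intro v h1 h2
    rw [hnet]
    simp [h1.symm, h2.symm]

theorem gamma_path_erase (hst : s ≠ t) (hγ : IsFlowGame E c s t γ) {P : Finset (V × V)}
    (hP : IsSTPath E s t P) {e : V × V} (he : e ∈ P) : γ (P.erase e) ≤ 0 := by
  have hPE := STPath_sub hP
  obtain ⟨f, hf, h⟩ := gamma_ex hγ ((Finset.erase_subset e P).trans hPE)
  rw [← h]
  by_contra hpos
  push Not at hpos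
  have hfl := feas_fl hf
  obtain ⟨vs, ⟨h1, h2, h3, h4⟩, rfl⟩ := hP
  obtain ⟨p, q⟩ := e
  obtain ⟨X, Y, rfl⟩ := (mem_arcsOf _ _ _).1 he
  have hs : s ∈ X ++ [p] := by
    cases X <;> simp at h2 <;> simp [h2]
  have ht : t ∉ X ++ [p] := by
    have : t ∈ q :: Y := by
      have : (X ++ p :: q :: Y).getLast? = (q :: Y).getLast? := by
        have hh : X ++ p :: q :: Y = (X ++ [p]) ++ (q :: Y) := by simp
        rw [hh, List.getLast?_append_of_ne_nil _ (by simp)]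
      rw [this] at h3
      exact List.mem_of_getLast? h3
    intro h
    have hh : X ++ p :: q :: Y = (X ++ [p]) ++ (q :: Y) := by simp
    rw [hh, List.nodup_append] at h1
    exact h1.2.2 t h t this rfl
  have := potential_st hst hfl.2 (fun v => if v ∈ X ++ [p] then 1 else 0) (by rw [if_neg ht])
  rw [if_pos hs, one_mul] at this
  have h0 : net E f s ≤ 0 := by
    rw [← this]
    apply Finset.sum_nonpos
    rintro ⟨a, b⟩ hx
    have h0 := hfl.1 _ hx
    dsimp only
    by_cases ha : a ∈ X ++ [p]
    · by_cases hb : b ∈ X ++ [p]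
      · simp only [ha, hb, if_true]; simp
      · have : f (a, b) = 0 := by
          apply hf.2.1
          intro hmem
          rw [Finset.mem_erase] at hmem
          apply hmem.1
          obtain ⟨A, B, hAB⟩ := (mem_arcsOf _ _ _).1 hmem.2
          have hh : (X ++ [p]) ++ (q :: Y) = (A ++ [a]) ++ (b :: B) := by simpa using hAB
          rcases List.append_eq_append_iff.1 hh with ⟨Z, hZ1, hZ2⟩ | ⟨Z, hZ1, hZ2⟩
          · rcases List.eq_nil_or_concat Z with rfl | ⟨Z', z, rfl⟩
            · simp at hZ1 hZ2
              rw [hZ1.2, hZ2.1]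
            · exfalso
              have : a = z := by
                have := congrArg List.getLast? hZ1
                simpa [← List.append_assoc] using this
              subst this
              have h1' : ((X ++ [p]) ++ (q :: Y)).Nodup := by simpa using h1
              rw [List.nodup_append] at h1'
              exact h1'.2.2 a ha a (by rw [hZ2]; simp) rfl
          · cases Z with
            | nil =>
              simp at hZ1 hZ2
              rw [hZ1.2, hZ2.1]
            | cons z Z =>
              exfalso
              simp at hZ2
              apply hb
              rw [hZ1, hZ2.1]; simp
        rw [this]; simp
    · simp only [ha, if_false]
      split_ifs <;> linarith
  linarith

theorem gamma_remove (hst : s ≠ t) (hc : ∀ e ∈ E, 0 < c e) (hγ : IsFlowGame E c s t γ)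
    {N : Finset (V × V)} (hN : N ⊆ E) {e : V × V} (he : e ∈ E) :
    γ N ≤ γ (N.erase e) + c e := by
  obtain ⟨f, hf, h⟩ := gamma_ex hγ hN
  obtain ⟨m, h1, h2, h3⟩ := decomp hst _ f (feas_fl hf) le_rfl
  have hchi : ∀ (P : Finset (V × V)) x, 0 ≤ chi P x := by
    intro P x; unfold chi; split_ifs <;> simp
  set A := (stPaths E s t).filter (fun P => e ∉ P)
  have hnet : ∀ v, net E (fun x => ∑ P ∈ A, m P * chi P x) v =
      ∑ P ∈ A, m P * ((if s = v then 1 else 0) - (if t = v then 1 else 0)) := by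
    intro v
    rw [net_comb]
    apply Finset.sum_congr rfl
    intro P hP
    rw [net_chi_path (mem_stPaths.1 (Finset.mem_filter.1 hP).1)]
  have hle : ∀ x ∈ E, ∑ P ∈ A, m P * chi P x ≤ f x := by
    intro x hx
    refine le_trans ?_ (h2 x hx)
    apply Finset.sum_le_sum_of_subset_of_nonneg (Finset.filter_subset _ _)
    intros
    exact mul_nonneg (h1 _) (hchi _ _)
  have h0 : ∀ x, 0 ≤ ∑ P ∈ A, m P * chi P x := fun x =>
    Finset.sum_nonneg (fun P _ => mul_nonneg (h1 _) (hchi _ _))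
  have := le_gamma hγ ((Finset.erase_subset e N).trans hN)
    (f := fun x => ∑ P ∈ A, m P * chi P x) (feas_mk ?_ ?_ ?_)
  · rw [hnet] at this
    simp [hst.symm] at this
    have h4 : ∑ P ∈ (stPaths E s t).filter (fun P => ¬ e ∉ P), m P ≤ c e := by
      refine le_trans ?_ ((h2 e he).trans (hf.1 e he).2)
      rw [Finset.sum_filter]
      apply Finset.sum_le_sum
      intro P _
      unfold chi
      by_cases hP : e ∈ P <;> simp [hP]
    have h5 := Finset.sum_filter_add_sum_filter_not (stPaths E s t) (fun P => e ∉ P) m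
    linarith
  · intro x hx
    exact ⟨h0 x, (hle x hx).trans (hf.1 x hx).2⟩
  · intro x hx
    by_cases hxe : x = e
    · apply Finset.sum_eq_zero
      intro P hP
      have := (Finset.mem_filter.1 hP).2
      simp [chi, hxe, this]
    · by_cases hxE : x ∈ E
      · have hf0 := hf.2.1 x (fun h => hx (Finset.mem_erase.2 ⟨hxe, h⟩))
        have := hle x hxE
        have := h0 x
        linarith
      · apply Finset.sum_eq_zero
        intro P hP
        have := STPath_sub (mem_stPaths.1 (Finset.mem_filter.1 hP).1)
        have : x ∉ P := fun h => hxE (this h)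
        simp [chi, this]
  · intro v h1 h2
    rw [hnet]
    simp [h1.symm, h2.symm]

theorem core (hst : s ≠ t) (hc : ∀ e ∈ E, 0 < c e) (hγ : IsFlowGame E c s t γ)
    (hconv : GameConvex E γ) {P Q : Finset (V × V)} (hP : IsSTPath E s t P)
    (hQ : IsSTPath E s t Q) {e y1 y2 : V × V} (heP : e ∈ P) (heQ : e ∈ Q)
    (hy1 : y1 ∈ P) (hy1' : y1 ∉ Q) (hy2 : y2 ∈ Q) (hy2' : y2 ∉ P)
    (hmin : ∀ x ∈ P, c e ≤ c x)
    (hflow : ∀ f, (∀ v, v ≠ s → v ≠ t → net E f v = 0) → (∀ x, x ∉ P ∪ Q → f x = 0) →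
      f e = f y1 + f y2) : False := by
  have hPE := STPath_sub hP
  have hQE := STPath_sub hQ
  set N := P ∪ Q with hN
  have hNE : N ⊆ E := Finset.union_subset hPE hQE
  have hPN : P ⊆ N := Finset.subset_union_left
  have hQN : Q ⊆ N := Finset.subset_union_right
  have hey1 : e ≠ y1 := by rintro rfl; exact hy1' heQ
  have hey2 : e ≠ y2 := by rintro rfl; exact hy2' heP
  have hy12 : y1 ≠ y2 := by rintro rfl; exact hy2' hy1
  have hfl : ∀ S ⊆ N, ∀ f, IsFeasibleFlow E c s t S f → f e = f y1 + f y2 ∧ 0 ≤ f y1 ∧ 0 ≤ f y2 := by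
    intro S hS f hf
    refine ⟨hflow f (feas_fl hf).2 fun x hx => hf.2.1 x fun h => hx (hS h),
      (hf.1 _ (hPE hy1)).1, (hf.1 _ (hQE hy2)).1⟩
  obtain ⟨z, hz, hzmin⟩ := Finset.exists_min_image Q c ⟨e, heQ⟩
  have hzpos := hc z (hQE hz)
  have gP := gamma_path_ge hst hγ hP (hc e (hPE heP)).le hc hmin
  have gQ := gamma_path_ge hst hγ hQ hzpos.le hc hzmin
  have gP0 := gamma_path_erase hst hγ hP heP
  have gQ0 := gamma_path_erase hst hγ hQ heQ
  have a1 := hconv e (hPE heP) (P.erase e) ((N.erase y2).erase e)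
    (by
      intro x hx
      simp only [Finset.mem_erase] at hx ⊢
      exact ⟨hx.1, by rintro rfl; exact hy2' hx.2, hPN hx.2⟩)
    (by intro x hx
        simp only [Finset.mem_erase] at hx ⊢
        exact ⟨hx.1, hNE hx.2.2⟩)
  rw [Finset.insert_erase heP,
    Finset.insert_erase (Finset.mem_erase.2 ⟨hey2, hPN heP⟩)] at a1
  have a2 := hconv e (hPE heP) (Q.erase e) ((N.erase y1).erase e)
    (by
      intro x hx
      simp only [Finset.mem_erase] at hx ⊢
      exact ⟨hx.1, by rintro rfl; exact hy1' hx.2, hQN hx.2⟩)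
    (by intro x hx
        simp only [Finset.mem_erase] at hx ⊢
        exact ⟨hx.1, hNE hx.2.2⟩)
  rw [Finset.insert_erase heQ,
    Finset.insert_erase (Finset.mem_erase.2 ⟨hey1, hPN heP⟩)] at a2
  have a3 := hconv y1 (hPE hy1) ((N.erase y2).erase y1) (N.erase y1)
    (Finset.erase_subset_erase _ (Finset.erase_subset _ _))
    (Finset.erase_subset_erase _ hNE)
  rw [Finset.insert_erase (hPN hy1),
    Finset.insert_erase (Finset.mem_erase.2 ⟨hy12, hPN hy1⟩)] at a3
  have a4 := gamma_remove hst hc hγ hNE (hPE heP)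
  have a5 : ∀ y, (y = y1 ∨ y = y2) → γ (N.erase e) ≤ γ ((N.erase y).erase e) := by
    intro y hy
    apply gamma_le_of hγ ((Finset.erase_subset _ _).trans hNE)
      ((Finset.erase_subset _ _).trans ((Finset.erase_subset _ _).trans hNE))
    intro f hf x hx hx'
    have h1 := hfl _ (Finset.erase_subset _ _) f hf
    have h2 : f e = 0 := hf.2.1 e (by simp)
    have h3 : x = y := by
      by_contra h
      apply hx'
      simp only [Finset.mem_erase] at hx ⊢
      exact ⟨hx.1, h, hx.2⟩
    rcases hy with rfl | rfl <;> subst h3 <;> linarith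
  have a6 : γ ((N.erase y2).erase y1) ≤ γ (N.erase e) := by
    apply gamma_le_of hγ ((Finset.erase_subset _ _).trans ((Finset.erase_subset _ _).trans hNE))
      ((Finset.erase_subset _ _).trans hNE)
    intro f hf x hx hx'
    have h1 := hfl _ ((Finset.erase_subset _ _).trans (Finset.erase_subset _ _)) f hf
    have h2 : f y1 = 0 := hf.2.1 y1 (by simp)
    have h2' : f y2 = 0 := hf.2.1 y2 (by simp)
    have h3 : x = e := by
      by_contra h
      apply hx'
      simp only [Finset.mem_erase] at hx ⊢
      exact ⟨h, hx.2.2⟩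
    subst h3; linarith
  have b1 := a5 y1 (Or.inl rfl)
  have b2 := a5 y2 (Or.inr rfl)
  linarith

end game

theorem cut_arc {V : Type*} [DecidableEq V] {S1 S2 : List V} (hn : (S1 ++ S2).Nodup) {a b : V}
    (h : (a, b) ∈ arcsOf (S1 ++ S2)) :
    (a ∈ S1 → b ∉ S1 → S1.getLast? = some a ∧ S2.head? = some b) ∧ (a ∈ S2 → b ∉ S1) := by
  obtain ⟨A, B, hAB⟩ := (mem_arcsOf _ _ _).1 h
  have hd : ∀ x, x ∈ S1 → x ∉ S2 := by
    intro x h1 h2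
    rw [List.nodup_append] at hn
    exact hn.2.2 x h1 x h2 rfl
  have hh : S1 ++ S2 = (A ++ [a]) ++ (b :: B) := by simpa using hAB
  rcases List.append_eq_append_iff.1 hh with ⟨Z, hZ1, hZ2⟩ | ⟨Z, hZ1, hZ2⟩
  · rcases List.eq_nil_or_concat Z with rfl | ⟨Z', z, rfl⟩
    · simp at hZ1 hZ2
      refine ⟨fun _ _ => ?_, fun h => absurd h (hd a (by rw [← hZ1]; simp))⟩
      rw [← hZ1, hZ2]; simp
    · have : a = z := by
        have := congrArg List.getLast? hZ1
        simpa [← List.append_assoc] using this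
      subst this
      have ha : a ∈ S2 := by rw [hZ2]; simp
      have hb : b ∈ S2 := by rw [hZ2]; simp
      exact ⟨fun h => absurd ha (hd a h), fun _ h => hd b h hb⟩
  · cases Z with
    | nil =>
      simp at hZ1 hZ2
      refine ⟨fun _ _ => ?_, fun h => absurd h (hd a (by rw [hZ1]; simp))⟩
      rw [hZ1, ← hZ2]; simp
    | cons z Z =>
      simp at hZ2
      have ha : a ∈ S1 := by rw [hZ1]; simp
      have hb : b ∈ S1 := by rw [hZ1, hZ2.1]; simp
      exact ⟨fun _ h => absurd hb h, fun h => absurd h (hd a ha)⟩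

theorem block_arc {V : Type*} [DecidableEq V] {X L Y : List V} {u w h l : V}
    (hn : (X ++ u :: (L ++ w :: Y)).Nodup) (hh : L.head? = some h) (hl : L.getLast? = some l)
    {a b : V} (hab : (a, b) ∈ arcsOf (X ++ u :: (L ++ w :: Y))) :
    (a ∈ L → b ∉ L → a = l ∧ b = w) ∧ (a ∉ L → b ∈ L → a = u ∧ b = h) := by
  have e1 : X ++ u :: (L ++ w :: Y) = (X ++ [u]) ++ (L ++ w :: Y) := by simp
  have e2 : X ++ u :: (L ++ w :: Y) = (X ++ u :: L) ++ (w :: Y) := by simp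
  have n1 := hn
  have n2 := hn
  have c1 := hab
  have c2 := hab
  have hmem : a ∈ X ++ u :: (L ++ w :: Y) := by
    obtain ⟨A, B, hAB⟩ := (mem_arcsOf _ _ _).1 hab
    rw [hAB]; simp
  rw [e1] at n1 c1
  rw [e2] at n2 c2
  have k1 := cut_arc n1 c1
  have k2 := cut_arc n2 c2
  have hLne : L ≠ [] := by rintro rfl; simp at hh
  constructor
  · intro ha hb
    have h1 := k1.2 (by simp [ha])
    have h2 := k2.1 (by simp [ha]) (by
      intro h3
      simp at h1 h3
      tauto)
    have h3 : (X ++ u :: L).getLast? = L.getLast? := by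
      have : X ++ u :: L = (X ++ [u]) ++ L := by simp
      rw [this, List.getLast?_append_of_ne_nil _ hLne]
    rw [h3, hl] at h2
    simp at h2
    exact ⟨h2.1.symm, h2.2.symm⟩
  · intro ha hb
    have h2 : a ∉ w :: Y := fun h3 => k2.2 h3 (by simp [hb])
    have h3 : a ∈ X ++ [u] := by
      simp at hmem h2 ⊢
      tauto
    have h4 := k1.1 h3 (by
      intro h5
      rw [List.nodup_append] at n1
      exact n1.2.2 b h5 b (by simp [hb]) rfl)
    rw [List.head?_append, hh] at h4
    simp at h4
    exact ⟨h4.1.symm, h4.2.symm⟩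

theorem prefix_split {V : Type*} (B1 : List V) : ∀ (B2 : List V) (q : V),
    (q :: B1).Nodup → (q :: B2).Nodup → (q :: B1).getLast? = (q :: B2).getLast? → B1 ≠ B2 →
    ∃ L w1 w2 Y1 Y2, w1 ≠ w2 ∧ B1 = L ++ w1 :: Y1 ∧ B2 = L ++ w2 :: Y2 := by
  induction B1 with
  | nil =>
    intro B2 q h1 h2 h3 h4
    exfalso
    cases B2 with
    | nil => exact h4 rfl
    | cons b B =>
      rw [List.getLast?_cons_cons] at h3
      exact (List.nodup_cons.1 h2).1 (List.mem_of_getLast? (by rw [← h3]; rfl))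
  | cons b1 C1 ih =>
    intro B2 q h1 h2 h3 h4
    cases B2 with
    | nil =>
      exfalso
      rw [List.getLast?_cons_cons] at h3
      exact (List.nodup_cons.1 h1).1 (List.mem_of_getLast? (by rw [h3]; rfl))
    | cons b2 C2 =>
      by_cases hb : b1 = b2
      · subst hb
        rw [List.getLast?_cons_cons, List.getLast?_cons_cons] at h3
        obtain ⟨L, w1, w2, Y1, Y2, hw, e1, e2⟩ := ih C2 b1 (List.nodup_cons.1 h1).2
          (List.nodup_cons.1 h2).2 h3 (by rintro rfl; exact h4 rfl)
        exact ⟨b1 :: L, w1, w2, Y1, Y2, hw, by rw [e1]; rfl, by rw [e2]; rfl⟩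
      · exact ⟨[], b1, b2, C1, C2, hb, rfl, rfl⟩

section game2
variable {V : Type*} [Fintype V] [DecidableEq V]
    {E : Finset (V × V)} {c : V × V → ℝ} {s t : V} {γ : Finset (V × V) → ℝ}

theorem sum3 {f k : V × V → ℝ} {e y1 y2 : V × V} (he : e ∈ E) (h1 : y1 ∈ E) (h2 : y2 ∈ E)
    (hk : ∀ x ∈ E, f x * k x = (if x = y1 then f y1 else 0) + (if x = y2 then f y2 else 0)
      - (if x = e then f e else 0)) (h0 : ∑ x ∈ E, f x * k x = 0) : f e = f y1 + f y2 := by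
  rw [Finset.sum_congr rfl hk, Finset.sum_sub_distrib, Finset.sum_add_distrib,
    Finset.sum_ite_eq', Finset.sum_ite_eq', Finset.sum_ite_eq', if_pos he, if_pos h1, if_pos h2]
    at h0
  linarith

set_option maxHeartbeats 1000000 in
theorem block_core (hst : s ≠ t) (hc : ∀ e ∈ E, 0 < c e) (hγ : IsFlowGame E c s t γ)
    (hconv : GameConvex E γ) {X1 X2 Y1 Y2 L : List V} {u1 u2 w1 w2 h l : V}
    (hh : L.head? = some h) (hl : L.getLast? = some l)
    (hP : IsPathList E s t (X1 ++ u1 :: (L ++ w1 :: Y1)))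
    (hQ : IsPathList E s t (X2 ++ u2 :: (L ++ w2 :: Y2))) :
    (u1 = u2 → w1 ≠ w2 → ¬ ∀ x ∈ arcsOf (X1 ++ u1 :: (L ++ w1 :: Y1)), c (u1, h) ≤ c x) ∧
    (u1 ≠ u2 → w1 = w2 → ¬ ∀ x ∈ arcsOf (X1 ++ u1 :: (L ++ w1 :: Y1)), c (l, w1) ≤ c x) := by
  have hP' : IsSTPath E s t _ := ⟨_, hP, rfl⟩
  have hQ' : IsSTPath E s t _ := ⟨_, hQ, rfl⟩
  obtain ⟨nP, p2, p3, -⟩ := hP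
  obtain ⟨nQ, -, -, -⟩ := hQ
  have bP := fun a b => block_arc nP hh hl (a := a) (b := b)
  have bQ := fun a b => block_arc nQ hh hl (a := a) (b := b)
  have hmem : ∀ (X Y : List V) (u w : V), (u, h) ∈ arcsOf (X ++ u :: (L ++ w :: Y)) ∧
      (l, w) ∈ arcsOf (X ++ u :: (L ++ w :: Y)) := by
    intro X Y u w
    simp only [mem_arcsOf]
    constructor
    · obtain ⟨L', rfl⟩ := List.head?_eq_some_iff.1 hh
      exact ⟨X, L' ++ w :: Y, by simp⟩
    · obtain ⟨L', rfl⟩ := List.getLast?_eq_some_iff.1 hl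
      exact ⟨X ++ u :: L', Y, by simp⟩
  have mP := hmem X1 Y1 u1 w1
  have mQ := hmem X2 Y2 u2 w2
  have hL : h ∈ L := List.mem_of_head? hh
  have lL : l ∈ L := List.mem_of_getLast? hl
  have nin : ∀ (X Y : List V) (u w : V), (X ++ u :: (L ++ w :: Y)).Nodup →
      ∀ x ∈ L, x ∉ X ++ [u] ∧ x ∉ w :: Y := by
    intro X Y u w hn x hx
    have e1 : X ++ u :: (L ++ w :: Y) = (X ++ [u]) ++ (L ++ w :: Y) := by simp
    have e2 : X ++ u :: (L ++ w :: Y) = (X ++ u :: L) ++ (w :: Y) := by simp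
    have n1 := hn
    have n2 := hn
    rw [e1, List.nodup_append] at n1
    rw [e2, List.nodup_append] at n2
    exact ⟨fun k => n1.2.2 x k x (by simp [hx]) rfl, fun k => n2.2.2 x (by simp [hx]) x k rfl⟩
  have iP := nin _ _ _ _ nP
  have iQ := nin _ _ _ _ nQ
  have hu1 : u1 ∉ L := fun k => (iP _ k).1 (by simp)
  have hu2 : u2 ∉ L := fun k => (iQ _ k).1 (by simp)
  have hw1 : w1 ∉ L := fun k => (iP _ k).2 (by simp)
  have hw2 : w2 ∉ L := fun k => (iQ _ k).2 (by simp)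
  have hs : s ∉ L := by
    intro k
    apply (iP _ k).1
    cases X1 <;> simp at p2 <;> simp [p2]
  have ht : t ∉ L := by
    intro k
    apply (iP _ k).2
    have e2 : X1 ++ u1 :: (L ++ w1 :: Y1) = (X1 ++ u1 :: L) ++ (w1 :: Y1) := by simp
    rw [e2, List.getLast?_append_of_ne_nil _ (by simp)] at p3
    exact List.mem_of_getLast? p3
  have hPE := STPath_sub hP'
  have hQE := STPath_sub hQ'
  generalize arcsOf (X1 ++ u1 :: (L ++ w1 :: Y1)) = P at *
  generalize arcsOf (X2 ++ u2 :: (L ++ w2 :: Y2)) = Q at *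
  have pot : ∀ f : V × V → ℝ, (∀ v, v ≠ s → v ≠ t → net E f v = 0) →
      ∑ x ∈ E, f x * ((if x.1 ∈ L then 1 else 0) - (if x.2 ∈ L then 1 else 0)) = 0 := by
    intro f hf
    have := potential_st hst hf (fun v => if v ∈ L then 1 else 0) (by simp [ht])
    simpa [hs] using this
  constructor
  · rintro rfl hw hmin
    refine core hst hc hγ hconv hP' hQ' (e := (u1, h)) (y1 := (l, w1)) (y2 := (l, w2))
      mP.1 mQ.1 mP.2 (fun k => hw ((bQ _ _ k).1 lL hw1).2) mQ.2
      (fun k => hw ((bP _ _ k).1 lL hw2).2.symm) hmin ?_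
    intro f hf hN
    refine sum3 (hPE mP.1) (hPE mP.2) (hQE mQ.2) ?_ (pot f hf)
    rintro ⟨a, b⟩ hx
    dsimp only
    by_cases hxN : (a, b) ∈ P ∪ Q
    · have hor : (a ∈ L → b ∉ L → a = l ∧ (b = w1 ∨ b = w2)) ∧
          (a ∉ L → b ∈ L → a = u1 ∧ b = h) := by
        rcases Finset.mem_union.1 hxN with k | k
        · have := bP _ _ k; tauto
        · have := bQ _ _ k; tauto
      simp only [Prod.mk.injEq]
      by_cases ha : a ∈ L <;> by_cases hb : b ∈ L
      · have : b ≠ w1 := by rintro rfl; exact hw1 hb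
        have : b ≠ w2 := by rintro rfl; exact hw2 hb
        have : a ≠ u1 := by rintro rfl; exact hu1 ha
        simp [*]
      · have h3 : a ≠ u1 := by rintro rfl; exact hu1 ha
        obtain ⟨rfl, rfl | rfl⟩ := hor.1 ha hb
        · simp [ha, hb, h3, hw]
        · simp [ha, hb, h3, hw.symm]
      · obtain ⟨rfl, rfl⟩ := hor.2 ha hb
        have : a ≠ l := by rintro rfl; exact ha lL
        simp [ha, hb, this]
      · have : a ≠ l := by rintro rfl; exact ha lL
        have : b ≠ h := by rintro rfl; exact hb hL
        simp [*]
    · rw [hN _ hxN, zero_mul]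
      rw [if_neg (fun k => hxN (by rw [k]; exact Finset.mem_union_left _ mP.2)),
        if_neg (fun k => hxN (by rw [k]; exact Finset.mem_union_right _ mQ.2)),
        if_neg (fun k => hxN (by rw [k]; exact Finset.mem_union_left _ mP.1))]
      simp
  · rintro hu rfl hmin
    refine core hst hc hγ hconv hP' hQ' (e := (l, w1)) (y1 := (u1, h)) (y2 := (u2, h))
      mP.2 mQ.2 mP.1 (fun k => hu ((bQ _ _ k).2 hu1 hL).1) mQ.1
      (fun k => hu ((bP _ _ k).2 hu2 hL).1.symm) hmin ?_
    intro f hf hN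
    refine sum3 (k := fun x => ((if x.2 ∈ L then 1 else 0) - (if x.1 ∈ L then 1 else 0)))
      (hPE mP.2) (hPE mP.1) (hQE mQ.1) ?_ ?_
    swap
    · have := pot f hf
      rw [← neg_eq_zero, ← Finset.sum_neg_distrib] at this
      refine Eq.trans (Finset.sum_congr rfl ?_) this
      intros; ring
    rintro ⟨a, b⟩ hx
    dsimp only
    by_cases hxN : (a, b) ∈ P ∪ Q
    · have hor : (a ∈ L → b ∉ L → a = l ∧ b = w1) ∧
          (a ∉ L → b ∈ L → (a = u1 ∨ a = u2) ∧ b = h) := by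
        rcases Finset.mem_union.1 hxN with k | k
        · have := bP _ _ k; tauto
        · have := bQ _ _ k; tauto
      simp only [Prod.mk.injEq]
      by_cases ha : a ∈ L <;> by_cases hb : b ∈ L
      · have : b ≠ w1 := by rintro rfl; exact hw1 hb
        have : a ≠ u2 := by rintro rfl; exact hu2 ha
        have : a ≠ u1 := by rintro rfl; exact hu1 ha
        simp [*]
      · obtain ⟨rfl, rfl⟩ := hor.1 ha hb
        have h3 : b ≠ h := by rintro rfl; exact hb hL
        simp [ha, hb, h3]
      · obtain ⟨h4, rfl⟩ := hor.2 ha hb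
        have h3 : a ≠ l := by rintro rfl; exact ha lL
        rcases h4 with rfl | rfl
        · simp [ha, hb, h3, hu]
        · simp [ha, hb, h3, hu.symm]
      · have : a ≠ l := by rintro rfl; exact ha lL
        have : b ≠ h := by rintro rfl; exact hb hL
        simp [*]
    · rw [hN _ hxN, zero_mul]
      rw [if_neg (fun k => hxN (by rw [k]; exact Finset.mem_union_left _ mP.1)),
        if_neg (fun k => hxN (by rw [k]; exact Finset.mem_union_right _ mQ.1)),
        if_neg (fun k => hxN (by rw [k]; exact Finset.mem_union_left _ mP.2))]
      simp

theorem bottleneck_unique (hst : s ≠ t) (hc : ∀ e ∈ E, 0 < c e) (hγ : IsFlowGame E c s t γ)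
    (hconv : GameConvex E γ) {P Q : Finset (V × V)} (hP : IsSTPath E s t P)
    (hQ : IsSTPath E s t Q) {e : V × V} (heP : e ∈ P) (heQ : e ∈ Q)
    (hmin : ∀ x ∈ P, c e ≤ c x) : P = Q := by
  obtain ⟨vs, hP, rfl⟩ := hP
  obtain ⟨ws, hQ, rfl⟩ := hQ
  obtain ⟨p, q⟩ := e
  obtain ⟨A1, B1, rfl⟩ := (mem_arcsOf _ _ _).1 heP
  obtain ⟨A2, B2, rfl⟩ := (mem_arcsOf _ _ _).1 heQ
  have split : ∀ A B : List V, A ++ p :: q :: B = (A ++ [p]) ++ (q :: B) := by simp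
  have hB : B1 = B2 := by
    by_contra hB
    obtain ⟨L, w1, w2, Y1, Y2, hw, rfl, rfl⟩ := prefix_split B1 B2 q
      (by have := hP.1; rw [split] at this; exact (List.nodup_append.1 this).2.1)
      (by have := hQ.1; rw [split] at this; exact (List.nodup_append.1 this).2.1)
      (by
        have h1 := hP.2.2.1
        have h2 := hQ.2.2.1
        rw [split, List.getLast?_append_of_ne_nil _ (by simp)] at h1 h2
        rw [h1, h2]) hB
    exact (block_core hst hc hγ hconv (L := q :: L) (h := q) (l := (q :: L).getLast (by simp))
      rfl (List.getLast?_eq_some_getLast _) hP hQ).1 rfl hw hmin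
  have hA : A1 = A2 := by
    by_contra hA
    have hlast : ∀ A B : List V, (A ++ p :: q :: B).head? = some s →
        (p :: A.reverse).getLast? = some s := by
      intro A B h
      have : p :: A.reverse = (A ++ [p]).reverse := by simp
      rw [this, List.getLast?_reverse]
      cases A <;> simpa using h
    have hnod : ∀ A B : List V, (A ++ p :: q :: B).Nodup → (p :: A.reverse).Nodup := by
      intro A B h
      have : p :: A.reverse = (A ++ [p]).reverse := by simp
      rw [this, List.nodup_reverse]
      rw [split] at h
      exact (List.nodup_append.1 h).1
    obtain ⟨L, w1, w2, Y1, Y2, hw, e1, e2⟩ := prefix_split A1.reverse A2.reverse p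
      (hnod _ _ hP.1) (hnod _ _ hQ.1)
      (by rw [hlast _ _ hP.2.1, hlast _ _ hQ.2.1]) (fun h => hA (List.reverse_injective h))
    have f1 : A1 = Y1.reverse ++ w1 :: L.reverse := by
      have := congrArg List.reverse e1
      simpa using this
    have f2 : A2 = Y2.reverse ++ w2 :: L.reverse := by
      have := congrArg List.reverse e2
      simpa using this
    have g : ∀ (Y B : List V) (w : V), (Y.reverse ++ w :: L.reverse) ++ p :: q :: B =
      Y.reverse ++ w :: ((L.reverse ++ [p]) ++ q :: B) := by simp
    rw [f1, g] at hP hmin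
    rw [f2, g] at hQ
    exact (block_core hst hc hγ hconv (L := L.reverse ++ [p])
      (h := (L.reverse ++ [p]).head (by simp)) (l := p)
      (List.head?_eq_some_head _) (by simp) hP hQ).2 hw rfl hmin
  rw [hA, hB]

end game2

/-- Acyclicity.  If every arc of the flow network lies on some
`s`-`t` path and the flow game is convex, then the network is acyclic. -/
theorem acyclicity
    {V : Type*} [Fintype V] [DecidableEq V]
    (E : Finset (V × V)) (c : V × V → ℝ) (s t : V) (γ : Finset (V × V) → ℝ)
    (hst : s ≠ t) (hc : ∀ e ∈ E, 0 < c e)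
    (hγ : IsFlowGame E c s t γ)
    (hcover : ∀ e ∈ E, ∃ P : Finset (V × V), IsSTPath E s t P ∧ e ∈ P)
    (hconv : GameConvex E γ) :
    ¬ HasDirectedCycle E := by
  rintro ⟨v, vs, hn, hch, hlast⟩
  set l := (v :: vs).getLast (List.cons_ne_nil v vs) with hl
  set C := insert (l, v) (arcsOf (v :: vs)) with hC
  have hCE : C ⊆ E := Finset.insert_subset hlast (arcsOf_subset hch)
  have hnm : (l, v) ∉ arcsOf (v :: vs) := by
    intro h
    obtain ⟨X, Y, h⟩ := (mem_arcsOf _ _ _).1 h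
    cases X with
    | nil =>
      simp at h
      rw [h.2] at hn
      simp at hn
    | cons x X =>
      simp at h
      rw [h.2] at hn
      simp at hn
  have hnetC : ∀ u, net E (chi C) u = 0 := by
    intro u
    have h1 := telescope (fun z => if z = u then (1:ℝ) else 0) (v :: vs) v l hn rfl
      (List.getLast?_eq_some_getLast _)
    have h2 : net E (chi C) u = ∑ x ∈ C,
        ((if x.1 = u then (1:ℝ) else 0) - (if x.2 = u then 1 else 0)) := by
      simp only [net, chi, ite_mul, one_mul, zero_mul]
      rw [← Finset.sum_filter]
      congr 1
      ext x
      simp only [Finset.mem_filter]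
      exact ⟨fun h => h.2, fun h => ⟨hCE h, h⟩⟩
    rw [h2, hC, Finset.sum_insert hnm, h1]
    ring
  set A := stPaths E s t with hA
  let F : V × V → ℝ := fun x => ∑ P ∈ A, 1 * chi P x
  have hnetF : ∀ u, net E F u =
      ∑ P ∈ A, 1 * (((if s = u then 1 else 0) - (if t = u then 1 else 0) : ℝ)) := by
    intro u
    rw [net_comb]
    apply Finset.sum_congr rfl
    intro P hP
    rw [net_chi_path (mem_stPaths.1 hP)]
  have hchi : ∀ (P : Finset (V × V)) x, 0 ≤ chi P x := by
    intro P x; unfold chi; split_ifs <;> simp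
  have hchi1 : ∀ (P : Finset (V × V)) x, chi P x ≤ 1 := by
    intro P x; unfold chi; split_ifs <;> simp
  have hF1 : ∀ x ∈ E, 1 ≤ F x := by
    intro x hx
    obtain ⟨P, hP, hxP⟩ := hcover x hx
    have := Finset.single_le_sum (f := fun P => 1 * chi P x) (s := A)
      (fun P _ => by simpa using hchi P x) (mem_stPaths.2 hP)
    have h9 : (1:ℝ) * chi P x = 1 := by simp [chi, hxP]
    exact h9.symm.le.trans this
  obtain ⟨m, h1, h2, h3⟩ := decomp hst _ (fun x => F x - 1 * chi C x) (E := E) (s := s) (t := t)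
    ⟨by
      intro x hx
      have := hF1 x hx
      have := hchi1 C x
      linarith, by
      intro u hu hu'
      rw [net_sub_smul, hnetC, hnetF]
      simp [hu.symm, hu'.symm]⟩ le_rfl
  rw [net_sub_smul, hnetC, hnetF] at h3
  have hm1 : ∀ P ∈ A, m P ≤ 1 := by
    intro P hP
    have hP' := mem_stPaths.1 hP
    obtain ⟨e, he, hmin⟩ := Finset.exists_min_image P c (STPath_nonempty hst hP')
    have huniq : ∀ Q ∈ A, Q ≠ P → chi Q e = 0 := by
      intro Q hQ hne
      unfold chi
      rw [if_neg]
      intro heQ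
      exact hne (bottleneck_unique hst hc hγ hconv hP' (mem_stPaths.1 hQ) he heQ hmin).symm
    have h4 := h2 e (STPath_sub hP' he)
    have h5 : ∀ k : Finset (V × V) → ℝ, ∑ Q ∈ A, k Q * chi Q e = k P := by
      intro k
      rw [Finset.sum_eq_single P]
      · simp [chi, he]
      · intro Q hQ hne
        rw [huniq Q hQ hne, mul_zero]
      · intro h; exact absurd hP h
    have h6 : F e = 1 := h5 (fun _ => 1)
    rw [h5, h6] at h4
    have := hchi C e
    linarith
  have hm : ∀ P ∈ A, m P = 1 := by
    have h4 : ∑ P ∈ A, m P = ∑ P ∈ A, (1:ℝ) := by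
      apply le_antisymm (Finset.sum_le_sum hm1)
      simpa [hst.symm] using h3
    exact (Finset.sum_eq_sum_iff_of_le hm1).1 h4
  have h4 := h2 (l, v) hlast
  have h5 : ∑ P ∈ A, m P * chi P (l, v) = F (l, v) :=
    Finset.sum_congr rfl fun P hP => by rw [hm P hP]
  rw [h5] at h4
  have : chi C (l, v) = 1 := by simp [chi, hC]
  rw [this] at h4
  linarith
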